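/- Let f be nilpotent on V with Ulm invariants d(r) (number of Jordan blocks of size r). If exactly two Ulm invariants d(i), d(j) equal 1 and j = i + 1 (the corresponding sizes are consecutive integers), then every characteristic subspace of V is hyperinvariant. -/

import Mathlib

open LinearMap

variable {K : Type*} [Field K] {V : Type*} [AddCommGroup V] [Module K V]

/-- `X` is hyperinvariant for `f`: invariant under every endomorphism commuting with `f`. -/
def Hinv (f : V →ₗ[K] V) (X : Submodule K V) : Prop :=
  ∀ g : V →ₗ[K] V, g ∘ₗ f = f ∘ₗ g → X.map g ≤ X

/-- `X` is characteristic for `f`: `f`-invariant and fixed by every automorphism commuting with `f`. -/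
def Chinv (f : V →ₗ[K] V) (X : Submodule K V) : Prop :=
  X.map f ≤ X ∧
    ∀ α : V ≃ₗ[K] V, (α : V →ₗ[K] V) ∘ₗ f = f ∘ₗ (α : V →ₗ[K] V) →
      X.map (α : V →ₗ[K] V) = X

/-- The cyclic subspace generated by `x`. -/
def cyc (f : V →ₗ[K] V) (x : V) : Submodule K V :=
  Submodule.span K (Set.range fun i : ℕ => (f ^ i) x)

/-- `x` has exponent `ℓ`. -/
def ExpEq (f : V →ₗ[K] V) (x : V) (ℓ : ℕ) : Prop :=
  (f ^ ℓ) x = 0 ∧ ∀ j < ℓ, (f ^ j) x ≠ 0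

/-- `x` has height `q`. -/
def HeightEq (f : V →ₗ[K] V) (x : V) (q : ℕ) : Prop :=
  x ∈ LinearMap.range (f ^ q) ∧ x ∉ LinearMap.range (f ^ (q + 1))

/-- The `r`-th Ulm invariant: number of Jordan blocks of size `r` (for `r ≥ 1`). -/
noncomputable def ulm (f : V →ₗ[K] V) (r : ℕ) : ℕ :=
  Module.finrank K ↥(LinearMap.ker f ⊓ LinearMap.range (f ^ (r - 1))) -
    Module.finrank K ↥(LinearMap.ker f ⊓ LinearMap.range (f ^ r))

/-- `u` is a generator tuple with exponents `t`. -/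
def IsGenTuple {k : ℕ} (f : V →ₗ[K] V) (u : Fin k → V) (t : Fin k → ℕ) : Prop :=
  (∀ i, ExpEq f (u i) (t i)) ∧ DirectSum.IsInternal (fun i => cyc f (u i))

/-- The summand `⟨U_a⟩` of all cyclic subspaces whose generator has exponent `a`. -/
def subU {k : ℕ} (f : V →ₗ[K] V) (u : Fin k → V) (t : Fin k → ℕ) (a : ℕ) : Submodule K V :=
  ⨆ i ∈ {i : Fin k | t i = a}, cyc f (u i)

/-!
Through `f`, regard `V` as a `K[X]`-module, a finite product of cyclic modules `K[X] ⧸ (X ^ k s)`;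
characteristic and hyperinvariant subspaces become characteristic and fully invariant submodules.
Let `N` be a characteristic submodule. If `g` is a nilpotent endomorphism, then `1 + g` is an
automorphism, so `N` is stable under `g`, in particular under every homomorphism from one factor to
a different one. Endomorphisms of a cyclic factor are scalars, so `N` is fully invariant as soon as
it contains the components of its elements.

A component in a factor whose size is repeated lies in `N`: send it to an isomorphic factor and
back. If only one factor remains, subtraction settles it. Otherwise two remain, of sizes `n` and
`n + 1`. If `a` and `b` are the components of `x ∈ N` there, then `N` contains the reduction of `b`
modulo `X ^ n` and the element `X a` of the larger factor. Comparing the orders of `a` and `b` at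
`X`, either `a` is a multiple of `b` or `b` is a multiple of `X a`, so one of the two components
lies in `N`, hence, by subtraction, so does the other.
-/

section Characteristic

variable {R : Type*} [CommRing R]
  {M : Type*} [AddCommGroup M] [Module R M] {M₂ : Type*} [AddCommGroup M₂] [Module R M₂]

/-- A characteristic submodule: one that every automorphism of the ambient module maps into itself
(hence, applying this to the inverse automorphism, onto itself). It weakens
`Submodule.IsFullyInvariant` from endomorphisms to automorphisms. -/
def IsCharacteristicSubmodule (N : Submodule R M) : Prop :=
  ∀ e : M ≃ₗ[R] M, N ≤ N.comap e.toLinearMap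

theorem IsCharacteristicSubmodule.map_equiv {N : Submodule R M}
    (hN : IsCharacteristicSubmodule N) (e : M ≃ₗ[R] M₂) :
    IsCharacteristicSubmodule (N.map e.toLinearMap) := by
  rintro g _ ⟨x, hx, rfl⟩
  exact ⟨(e.trans (g.trans e.symm)) x, hN _ hx, by simp⟩

theorem isFullyInvariant_of_map_equiv {N : Submodule R M} (e : M ≃ₗ[R] M₂)
    (hN : (N.map e.toLinearMap).IsFullyInvariant) : N.IsFullyInvariant := by
  intro g x hx
  have h : e (g x) ∈ N.map e.toLinearMap := by
    simpa using hN (e.toLinearMap ∘ₗ g ∘ₗ e.symm.toLinearMap) (Submodule.mem_map_of_mem hx)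
  simpa using h

theorem IsCharacteristicSubmodule.apply_mem_of_isNilpotent {N : Submodule R M}
    (hN : IsCharacteristicSubmodule N) {g : Module.End R M} (hg : IsNilpotent g)
    {x : M} (hx : x ∈ N) : g x ∈ N := by
  let e := LinearEquiv.ofBijective (1 + g) ((Module.End.isUnit_iff _).mp hg.isUnit_one_add)
  have hex : x + g x ∈ N := hN e hx
  exact (N.add_mem_iff_right hx).mp hex

theorem exists_eq_smul_of_isPrincipal_top [hM : (⊤ : Submodule R M).IsPrincipal]
    (g : Module.End R M) : ∃ c : R, ∀ m, g m = c • m := by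
  obtain ⟨m₀, hm₀⟩ := hM
  have hgen (m : M) : ∃ a : R, a • m₀ = m :=
    Submodule.mem_span_singleton.mp (hm₀ ▸ Submodule.mem_top)
  obtain ⟨c, hc⟩ := hgen (g m₀)
  refine ⟨c, fun m ↦ ?_⟩
  obtain ⟨a, rfl⟩ := hgen m
  rw [map_smul, ← hc, smul_comm]

instance isPrincipal_top_quotient (I : Ideal R) : (⊤ : Submodule R (R ⧸ I)).IsPrincipal :=
  have : ((⊤ : Submodule R (R ⧸ I)).comap I.mkQ).IsPrincipal := top_isPrincipal
  .of_comap I.mkQ I.mkQ_surjective ⊤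

end Characteristic

section Product

variable {R : Type*} [CommRing R] {ι : Type*} [DecidableEq ι]
  {M : ι → Type*} [∀ s, AddCommGroup (M s)] [∀ s, Module R (M s)]
  {N : Submodule R (∀ s, M s)}

/-- The submodule `N` of the product `∏ s, M s` splits at `s` if it contains the `s`-th component
of each of its elements, that is, if it is stable under the projection onto `M s`. -/
def SplitsAt (N : Submodule R (∀ s, M s)) (s : ι) : Prop :=
  ∀ x ∈ N, Pi.single s (x s) ∈ N

theorem IsCharacteristicSubmodule.single_mem (hN : IsCharacteristicSubmodule N) {s t : ι}
    (hst : s ≠ t) (g : M s →ₗ[R] M t) {x : ∀ s, M s} (hx : x ∈ N) : Pi.single t (g (x s)) ∈ N := by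
  let G : Module.End R (∀ s, M s) := single R M t ∘ₗ g ∘ₗ proj s
  have hG : IsNilpotent G := ⟨2, LinearMap.ext fun y ↦ by simp [G, sq, hst]⟩
  exact hN.apply_mem_of_isNilpotent hG hx

theorem IsCharacteristicSubmodule.splitsAt_of_equiv (hN : IsCharacteristicSubmodule N) {s t : ι}
    (hst : s ≠ t) (e : M s ≃ₗ[R] M t) : SplitsAt N s := fun x hx ↦ by
  simpa using hN.single_mem hst.symm e.symm.toLinearMap (hN.single_mem hst e.toLinearMap hx)

variable [Finite ι]

theorem sum_single_mem_of_splitsAt (S : Finset ι) (h : ∀ t ∉ S, SplitsAt N t)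
    {x : ∀ s, M s} (hx : x ∈ N) : ∑ s ∈ S, Pi.single s (x s) ∈ N := by
  cases nonempty_fintype ι
  have hsum : ∑ s ∈ S, Pi.single s (x s) + ∑ t ∈ Sᶜ, Pi.single t (x t) = x := by
    rw [Finset.sum_add_sum_compl, Finset.univ_sum_single]
  rw [← N.add_mem_iff_left (N.sum_mem fun t ht ↦ h t (Finset.mem_compl.mp ht) x hx), hsum]
  exact hx

theorem splitsAt_of_forall_ne {s : ι} (h : ∀ t ≠ s, SplitsAt N t) : SplitsAt N s :=
  fun x hx ↦ by simpa using sum_single_mem_of_splitsAt {s} (by simpa using h) hx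

theorem IsCharacteristicSubmodule.isFullyInvariant_of_splitsAt
    [∀ s, (⊤ : Submodule R (M s)).IsPrincipal] (hN : IsCharacteristicSubmodule N)
    (h : ∀ s, SplitsAt N s) : N.IsFullyInvariant := by
  cases nonempty_fintype ι
  intro g x hx
  have hblocks : g x = ∑ s, ∑ t, Pi.single t (g (Pi.single s (x s)) t) := by
    simp_rw [Finset.univ_sum_single]
    rw [← map_sum, Finset.univ_sum_single]
  rw [Submodule.mem_comap, hblocks]
  refine N.sum_mem fun s _ ↦ N.sum_mem fun t _ ↦ ?_
  let gst : M s →ₗ[R] M t := proj t ∘ₗ g ∘ₗ single R M s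
  obtain rfl | hst := eq_or_ne s t
  · obtain ⟨c, hc⟩ := exists_eq_smul_of_isPrincipal_top gst
    have hdiag : Pi.single s (g (Pi.single s (x s)) s) = c • Pi.single s (x s) := by
      rw [← Pi.single_smul, ← hc]; rfl
    exact hdiag ▸ N.smul_mem c (h s x hx)
  · exact hN.single_mem hst gst hx

end Product

section CyclicSummands

variable {R : Type*} [CommRing R] {p : R}

theorem isCoprime_of_not_dvd (hp : (Ideal.span {p}).IsMaximal) {a : R} (ha : ¬ p ∣ a) :
    IsCoprime a p := by
  obtain ⟨u, q, hq, huq⟩ := hp.exists_inv (mt Ideal.mem_span_singleton.mp ha)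
  obtain ⟨v, rfl⟩ := Ideal.mem_span_singleton.mp hq
  exact ⟨u, v, by rw [mul_comm v, huq]⟩

theorem exists_pow_dvd_sub_mul_or (hp : (Ideal.span {p}).IsMaximal) (n : ℕ) (a b : R) :
    (∃ c, p ^ n ∣ a - c * b) ∨ ∃ c, p ^ n ∣ b - c * (p * a) := by
  induction n generalizing a b with
  | zero => simp
  | succ n ih =>
    by_cases hb : p ∣ b
    · obtain ⟨b, rfl⟩ := hb
      by_cases ha : p ∣ a
      · obtain ⟨a, rfl⟩ := ha
        refine (ih a b).imp ?_ ?_ <;> rintro ⟨c, d, hd⟩ <;>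
          exact ⟨c, d, by linear_combination p * hd⟩
      · obtain ⟨u, v, huv⟩ := (isCoprime_of_not_dvd hp ha).pow_right (n := n + 1)
        exact .inr ⟨b * u, p * b * v, by linear_combination -p * b * huv⟩
    · obtain ⟨u, v, huv⟩ := (isCoprime_of_not_dvd hp hb).pow_right (n := n + 1)
      exact .inl ⟨a * u, a * v, by linear_combination -a * huv⟩

variable {ι : Type*} {k : ι → ℕ}
  {N : Submodule R (∀ s, R ⧸ Ideal.span {p ^ k s})}

theorem splitsAt_of_eq_zero [DecidableEq ι] {s : ι} (hs : k s = 0) : SplitsAt N s := by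
  intro x _
  have : Subsingleton (R ⧸ Ideal.span {p ^ k s}) := by
    rw [Ideal.Quotient.subsingleton_iff, hs, pow_zero, Ideal.span_singleton_one]
  rw [Subsingleton.elim (x s) 0, Pi.single_zero]
  exact N.zero_mem

namespace IsCharacteristicSubmodule

theorem single_mem_or_single_mem [DecidableEq ι] (hp : (Ideal.span {p}).IsMaximal)
    (hN : IsCharacteristicSubmodule N) {s t : ι} (hst : k t = k s + 1)
    {x : ∀ s, R ⧸ Ideal.span {p ^ k s}} (hx : x ∈ N) :
    Pi.single s (x s) ∈ N ∨ Pi.single t (x t) ∈ N := by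
  have hne : s ≠ t := by rintro rfl; omega
  obtain ⟨a, ha⟩ := Ideal.Quotient.mk_surjective (x s)
  obtain ⟨b, hb⟩ := Ideal.Quotient.mk_surjective (x t)
  let reduce : (R ⧸ Ideal.span {p ^ k t}) →ₗ[R] R ⧸ Ideal.span {p ^ k s} :=
    Submodule.factor (Ideal.span_singleton_le_span_singleton.mpr (pow_dvd_pow p (by omega)))
  let mulp : (R ⧸ Ideal.span {p ^ k s}) →ₗ[R] R ⧸ Ideal.span {p ^ k t} :=
    Submodule.mapQ _ _ (LinearMap.mulLeft R p) (by
      rw [Ideal.span_singleton_le_iff_mem, Submodule.mem_comap, mulLeft_apply,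
        Ideal.mem_span_singleton, hst, pow_succ'])
  have hbs : Pi.single s (Ideal.Quotient.mk _ b) ∈ N := by
    have := hN.single_mem hne.symm reduce hx
    rwa [← hb] at this
  have hat : Pi.single t (Ideal.Quotient.mk _ (p * a)) ∈ N := by
    have := hN.single_mem hne mulp hx
    rwa [← ha] at this
  rw [← ha, ← hb]
  obtain ⟨c, hc⟩ | ⟨c, hc⟩ := exists_pow_dvd_sub_mul_or hp (k t) a b
  · left
    have hab : Ideal.Quotient.mk (Ideal.span {p ^ k s}) a = c • Ideal.Quotient.mk _ b :=
      Ideal.Quotient.eq.mpr (Ideal.mem_span_singleton.mpr ((pow_dvd_pow p (by omega)).trans hc))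
    rw [hab, Pi.single_smul]
    exact N.smul_mem c hbs
  · right
    have hba : Ideal.Quotient.mk (Ideal.span {p ^ k t}) b = c • Ideal.Quotient.mk _ (p * a) :=
      Ideal.Quotient.eq.mpr (Ideal.mem_span_singleton.mpr hc)
    rw [hba, Pi.single_smul]
    exact N.smul_mem c hat

theorem splitsAt_and_splitsAt [Finite ι] [DecidableEq ι] (hp : (Ideal.span {p}).IsMaximal)
    (hN : IsCharacteristicSubmodule N) {s t : ι} (hst : k t = k s + 1)
    (h : ∀ r, r ≠ s → r ≠ t → SplitsAt N r) : SplitsAt N s ∧ SplitsAt N t := by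
  have hne : s ≠ t := by rintro rfl; omega
  have hadd {x} (hx : x ∈ N) : Pi.single s (x s) + Pi.single t (x t) ∈ N := by
    simpa [Finset.sum_pair hne] using
      sum_single_mem_of_splitsAt {s, t} (fun r hr ↦ h r (by grind) (by grind)) hx
  have hiff {x} (hx : x ∈ N) : Pi.single s (x s) ∈ N ↔ Pi.single t (x t) ∈ N :=
    ⟨fun hs ↦ (N.add_mem_iff_right hs).mp (hadd hx), fun ht ↦ (N.add_mem_iff_left ht).mp (hadd hx)⟩
  have hor {x} (hx : x ∈ N) := hN.single_mem_or_single_mem hp hst hx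
  exact ⟨fun x hx ↦ (hor hx).elim id (hiff hx).mpr, fun x hx ↦ (hor hx).elim (hiff hx).mp id⟩

theorem isFullyInvariant_of_unrepeated_sizes [Finite ι] (hp : (Ideal.span {p}).IsMaximal)
    (hN : IsCharacteristicSubmodule N) {i : ℕ}
    (hk : ∀ s, k s ≠ 0 → (∀ t ≠ s, k t ≠ k s) → k s = i ∨ k s = i + 1) :
    N.IsFullyInvariant := by
  classical
  have hunique {s} (hs : ¬ SplitsAt N s) {t} (hts : t ≠ s) : k t ≠ k s := fun h ↦
    hs (hN.splitsAt_of_equiv hts.symm (Submodule.quotEquivOfEq _ _ (by rw [h])))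
  have hsize {s} (hs : ¬ SplitsAt N s) : k s = i ∨ k s = i + 1 :=
    hk s (mt splitsAt_of_eq_zero hs) fun t ↦ hunique hs
  refine hN.isFullyInvariant_of_splitsAt fun s ↦ ?_
  by_contra hs
  obtain ⟨t, hts, ht⟩ : ∃ t ≠ s, ¬ SplitsAt N t := by
    contrapose! hs
    exact splitsAt_of_forall_ne hs
  have hrest (r) (hrs : r ≠ s) (hrt : r ≠ t) : SplitsAt N r := by
    by_contra hr
    grind [hunique hs hts, hunique hs hrs, hunique ht hrt, hsize hr, hsize hs, hsize ht]
  obtain h | h : k t = k s + 1 ∨ k s = k t + 1 := by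
    grind [hunique hs hts, hsize hs, hsize ht]
  · exact hs (hN.splitsAt_and_splitsAt hp h hrest).1
  · exact hs (hN.splitsAt_and_splitsAt hp h fun r hrt hrs ↦ hrest r hrs hrt).2

end IsCharacteristicSubmodule

end CyclicSummands

section Commutant

open Polynomial

variable {f : V →ₗ[K] V} {W : Submodule K V}

theorem Chinv.mem_invtSubmodule (hW : Chinv f W) :
    W ∈ (Algebra.lsmul K K V f).invtSubmodule :=
  Submodule.map_le_iff_le_comap.mp hW.1

theorem Chinv.isCharacteristicSubmodule (hW : Chinv f W) :
    IsCharacteristicSubmodule (Module.AEval.mapSubmodule K V f ⟨W, hW.mem_invtSubmodule⟩) := by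
  intro e v hv
  let of := Module.AEval'.of f
  let α : V ≃ₗ[K] V := of.trans ((e.restrictScalars K).trans of.symm)
  have hα : (α : V →ₗ[K] V) ∘ₗ f = f ∘ₗ (α : V →ₗ[K] V) := by
    ext w
    simp [α, of, ← Module.AEval'.X_smul_of]
  rw [Module.AEval.mem_mapSubmodule_apply] at hv
  have := hW.2 α hα ▸ Submodule.mem_map_of_mem (f := (α : V →ₗ[K] V)) hv
  simpa [α, of] using this

theorem hinv_of_isFullyInvariant (hW : W ∈ (Algebra.lsmul K K V f).invtSubmodule)
    (h : (Module.AEval.mapSubmodule K V f ⟨W, hW⟩).IsFullyInvariant) : Hinv f W := by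
  rintro g hg _ ⟨v, hv, rfl⟩
  let of := Module.AEval'.of f
  let G : Module.End K[X] (Module.AEval' f) := LinearMap.ofAEval f (of ∘ₗ g) fun w ↦ by
    simpa [of, Module.AEval'.X_smul_of] using LinearMap.congr_fun hg w
  have hGv : G (of v) ∈ Module.AEval.mapSubmodule K V f ⟨W, hW⟩ := h G (by simpa [of] using hv)
  simpa [G, of, LinearMap.ofAEval] using hGv

theorem exists_linearEquiv_pi_quotient [FiniteDimensional K V] (hf : IsNilpotent f) :
    ∃ (d : ℕ) (k : Fin d → ℕ),
      Nonempty (Module.AEval' f ≃ₗ[K[X]] ∀ s, K[X] ⧸ Ideal.span {(X : K[X]) ^ k s}) := by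
  obtain ⟨n, hn⟩ := hf
  have htorsion : Module.IsTorsion' (Module.AEval' f) (Submonoid.powers (X : K[X])) := by
    intro v
    obtain ⟨v, rfl⟩ := (Module.AEval'.of f).surjective v
    refine ⟨⟨X ^ n, Submonoid.pow_mem _ (Submonoid.mem_powers _) n⟩, ?_⟩
    rw [Submonoid.mk_smul, Module.AEval'.X_pow_smul_of, hn, zero_smul, map_zero]
  obtain ⟨d, k, ⟨e⟩⟩ := Module.torsion_by_prime_power_decomposition irreducible_X htorsion
  exact ⟨d, k, ⟨e.trans (DirectSum.linearEquivFunOnFintype K[X] (Fin d) _)⟩⟩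

end Commutant

section Ulm

open Polynomial

/-- The subspace `ker f ∩ fⁿ V`, whose successive quotients have the Ulm invariants of `f` as their
dimensions. -/
def kerInfRangePow (f : V →ₗ[K] V) (n : ℕ) : Submodule K V := ker f ⊓ range (f ^ n)

theorem kerInfRangePow_antitone (f : V →ₗ[K] V) : Antitone (kerInfRangePow f) :=
  fun _ _ hmn ↦ inf_le_inf_left _ ((iterateRange f).monotone hmn)

theorem ulm_eq (f : V →ₗ[K] V) (r : ℕ) : ulm f r =
    Module.finrank K (kerInfRangePow f (r - 1)) - Module.finrank K (kerInfRangePow f r) := rfl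

theorem map_kerInfRangePow {W : Type*} [AddCommGroup W] [Module K W] {f : V →ₗ[K] V}
    {g : W →ₗ[K] W} (e : V ≃ₗ[K] W) (h : ∀ v, g (e v) = e (f v)) (n : ℕ) :
    (kerInfRangePow f n).map e.toLinearMap = kerInfRangePow g n := by
  have hpow (v : V) : (g ^ n) (e v) = e ((f ^ n) v) := congr_fun (congr_arg DFunLike.coe
    (Module.End.commute_pow_left_of_commute (f := e.toLinearMap) (LinearMap.ext h) n)) v
  ext w
  obtain ⟨v, rfl⟩ := e.surjective w
  simp [kerInfRangePow, h, e.surjective.exists, hpow]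

theorem ulm_eq_of_equiv {W : Type*} [AddCommGroup W] [Module K W] {f : V →ₗ[K] V} {g : W →ₗ[K] W}
    (e : V ≃ₗ[K] W) (h : ∀ v, g (e v) = e (f v)) (r : ℕ) : ulm f r = ulm g r := by
  rw [ulm_eq, ulm_eq, ← map_kerInfRangePow e h, ← map_kerInfRangePow e h,
    LinearEquiv.finrank_map_eq, LinearEquiv.finrank_map_eq]

section Product

variable {ι : Type*} {M : ι → Type*} [∀ s, AddCommGroup (M s)] [∀ s, Module K (M s)]

theorem finrank_submodule_pi [Fintype ι] [∀ s, FiniteDimensional K (M s)]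
    (p : ∀ s, Submodule K (M s)) :
    Module.finrank K (Submodule.pi Set.univ p) = ∑ s, Module.finrank K (p s) := by
  have hrange : Submodule.pi Set.univ p = range (piMap fun s ↦ (p s).subtype) := by
    ext x
    refine ⟨fun hx ↦ ⟨fun s ↦ ⟨x s, hx s trivial⟩, rfl⟩, ?_⟩
    rintro ⟨y, rfl⟩ s -
    exact (y s).2
  have hinj : Function.Injective (piMap fun s ↦ (p s).subtype) := fun x y hxy ↦
    funext fun s ↦ Subtype.ext (congr_fun hxy s)
  rw [hrange, finrank_range_of_inj hinj, Module.finrank_pi_fintype]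

theorem kerInfRangePow_piMap (f : ∀ s, M s →ₗ[K] M s) (n : ℕ) :
    kerInfRangePow (piMap f) n = Submodule.pi Set.univ fun s ↦ kerInfRangePow (f s) n := by
  have hpow : piMap f ^ n = piMap fun s ↦ f s ^ n := by
    induction n with
    | zero => rfl
    | succ n ih => simp only [pow_succ, ih]; rfl
  ext x
  simp [kerInfRangePow, hpow, funext_iff, forall_and, Classical.skolem]

theorem ulm_piMap [Fintype ι] [∀ s, FiniteDimensional K (M s)] (f : ∀ s, M s →ₗ[K] M s) (r : ℕ) :
    ulm (piMap f) r = ∑ s, ulm (f s) r := by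
  rw [ulm_eq, kerInfRangePow_piMap, kerInfRangePow_piMap, finrank_submodule_pi,
    finrank_submodule_pi]
  exact (Finset.sum_tsub_distrib _ fun s _ ↦
    Submodule.finrank_mono (kerInfRangePow_antitone _ (Nat.sub_le r 1))).symm

end Product

/-- The nilpotent Jordan block of size `k`, encoded as multiplication by `X` on `K[X] ⧸ (X ^ k)`.
Every nilpotent endomorphism of a finite-dimensional space is a product of such blocks. -/
noncomputable def nilpotentBlock (K : Type*) [Field K] (k : ℕ) :
    Module.End K (K[X] ⧸ Ideal.span {(X : K[X]) ^ k}) :=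
  Algebra.lsmul K K _ (X : K[X])

theorem nilpotentBlock_mk (k : ℕ) (a : K[X]) :
    nilpotentBlock K k (Ideal.Quotient.mk _ a) = Ideal.Quotient.mk _ (X * a) := rfl

theorem nilpotentBlock_pow_mk (k n : ℕ) (a : K[X]) :
    (nilpotentBlock K k ^ n) (Ideal.Quotient.mk _ a) = Ideal.Quotient.mk _ (X ^ n * a) := by
  rw [nilpotentBlock, ← map_pow]
  rfl

theorem ker_nilpotentBlock_succ (m : ℕ) :
    ker (nilpotentBlock K (m + 1)) = K ∙ Ideal.Quotient.mk _ (X ^ m : K[X]) := by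
  apply le_antisymm
  · intro y hy
    obtain ⟨a, rfl⟩ := Ideal.Quotient.mk_surjective y
    obtain ⟨b, rfl⟩ : X ^ m ∣ a := by
      rwa [mem_ker, nilpotentBlock_mk, Ideal.Quotient.eq_zero_iff_dvd, pow_succ',
        mul_dvd_mul_iff_left X_ne_zero] at hy
    have hb : X ∣ b.coeff 0 • 1 - b := by simp [X_dvd_iff]
    refine Submodule.mem_span_singleton.mpr ⟨b.coeff 0, Ideal.Quotient.eq.mpr ?_⟩
    rw [Ideal.mem_span_singleton]
    simpa [pow_succ, mul_sub] using mul_dvd_mul_left (X ^ m) hb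
  · rw [Submodule.span_singleton_le_iff_mem, mem_ker, nilpotentBlock_mk,
      Ideal.Quotient.eq_zero_iff_dvd, pow_succ']

theorem finrank_kerInfRangePow_nilpotentBlock (k n : ℕ) :
    Module.finrank K (kerInfRangePow (nilpotentBlock K k) n) = if n < k then 1 else 0 := by
  rw [kerInfRangePow]
  split_ifs with hn
  · obtain ⟨m, rfl⟩ := Nat.exists_eq_add_of_lt hn
    have hne : Ideal.Quotient.mk (Ideal.span {X ^ (n + m + 1)}) (X ^ (n + m) : K[X]) ≠ 0 := by
      simp [Ideal.Quotient.eq_zero_iff_dvd, X_pow_dvd_iff, -map_pow]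
    have hle : ker (nilpotentBlock K (n + m + 1)) ≤ range (nilpotentBlock K (n + m + 1) ^ n) := by
      rw [ker_nilpotentBlock_succ, Submodule.span_singleton_le_iff_mem]
      exact ⟨Ideal.Quotient.mk _ (X ^ m), by rw [nilpotentBlock_pow_mk, ← pow_add]⟩
    rw [inf_eq_left.mpr hle, ker_nilpotentBlock_succ, finrank_span_singleton hne]
  · have hzero : nilpotentBlock K k ^ n = 0 := by
      refine LinearMap.ext fun y ↦ ?_
      obtain ⟨a, rfl⟩ := Ideal.Quotient.mk_surjective y
      rw [nilpotentBlock_pow_mk, LinearMap.zero_apply, Ideal.Quotient.eq_zero_iff_dvd]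
      exact (pow_dvd_pow X (not_lt.mp hn)).mul_right a
    rw [hzero, range_zero, inf_bot_eq, finrank_bot]

theorem ulm_nilpotentBlock {r : ℕ} (hr : 1 ≤ r) (k : ℕ) :
    ulm (nilpotentBlock K k) r = if k = r then 1 else 0 := by
  rw [ulm_eq, finrank_kerInfRangePow_nilpotentBlock, finrank_kerInfRangePow_nilpotentBlock]
  grind

theorem ulm_eq_card {ι : Type*} [Fintype ι] {k : ι → ℕ} {f : V →ₗ[K] V}
    (e : Module.AEval' f ≃ₗ[K[X]] ∀ s, K[X] ⧸ Ideal.span {(X : K[X]) ^ k s}) {r : ℕ} (hr : 1 ≤ r) :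
    ulm f r = Finset.card {s | k s = r} := by
  have (s : ι) : FiniteDimensional K (K[X] ⧸ Ideal.span {(X : K[X]) ^ k s}) :=
    (monic_X_pow (k s)).finite_adjoinRoot
  let E : V ≃ₗ[K] ∀ s, K[X] ⧸ Ideal.span {(X : K[X]) ^ k s} :=
    Module.AEval'.of f ≪≫ₗ e.restrictScalars K
  have hE (v : V) : piMap (fun s ↦ nilpotentBlock K (k s)) (E v) = E (f v) := by
    have := e.map_smul (X : K[X]) (Module.AEval'.of f v)
    rw [Module.AEval'.X_smul_of] at this
    exact this.symm
  simp [ulm_eq_of_equiv E hE, ulm_piMap, ulm_nilpotentBlock hr]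

end Ulm

open Polynomial in
theorem stmt14_general [FiniteDimensional K V] (f : V →ₗ[K] V) (hf : IsNilpotent f)
    (i : ℕ) (hset : {r : ℕ | 1 ≤ r ∧ ulm f r = 1} ⊆ {i, i + 1}) :
    ∀ W : Submodule K V, Chinv f W → Hinv f W := by
  intro W hW
  obtain ⟨d, k, ⟨e⟩⟩ := exists_linearEquiv_pi_quotient hf
  have hsize (s) (hs : k s ≠ 0) (hunique : ∀ t ≠ s, k t ≠ k s) : k s = i ∨ k s = i + 1 := by
    have hone : Finset.card {t | k t = k s} = 1 :=
      Finset.card_eq_one.mpr ⟨s, by ext t; grind⟩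
    have hpos : 1 ≤ k s := Nat.one_le_iff_ne_zero.mpr hs
    exact hset ⟨hpos, (ulm_eq_card e hpos).trans hone⟩
  have hX : (Ideal.span {(X : K[X])}).IsMaximal :=
    PrincipalIdealRing.isMaximal_of_irreducible irreducible_X
  have hinv := (hW.isCharacteristicSubmodule.map_equiv e).isFullyInvariant_of_unrepeated_sizes
    hX hsize
  exact hinv_of_isFullyInvariant hW.mem_invtSubmodule (isFullyInvariant_of_map_equiv e hinv)

theorem stmt14 [FiniteDimensional K V] (f : V →ₗ[K] V) (hf : IsNilpotent f)
    (i : ℕ) (hi : 1 ≤ i) (hset : {r : ℕ | 1 ≤ r ∧ ulm f r = 1} = {i, i + 1}) :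
    ∀ X : Submodule K V, Chinv f X → Hinv f X :=
  stmt14_general f hf i hset.subset
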